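/- (Positivity of the limiting diffusivity sum, d ≥ 3.) Let d ≥ 3 and fix k ∈ ℤ^d∖{0}. For N ∈ ℕ set ε_N := 1/(N + 1/2). Then the limit lim_{N→∞} ε_N^{d−2} Σ_{ℓ,m ∈ ℤ^d∖{0}, ℓ+m=k, ε_N |ℓ|_∞ ≤ 1, ε_N |m|_∞ ≤ 1} 1/(|ℓ|² + |m|²) exists, equals (1/2) ∫_{[−1,1]^d} |x|^{−2} dx, and in particular is strictly positive and independent of k. -/

import Mathlib

open scoped Classical
open MeasureTheory

noncomputable section

namespace SBE
def nsq {d : ℕ} (k : Fin d → ℤ) : ℝ := ∑ i, ((k i : ℝ))^2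
def sN {d : ℕ} (k : Fin d → ℤ) : ℝ := ((Finset.univ.sup fun i => (k i).natAbs : ℕ) : ℝ)

def cst {d : ℕ} (l : Fin d → ℤ) : Fin d → ℝ := fun i => (l i : ℝ)

lemma sN_eq {d : ℕ} (l : Fin d → ℤ) : sN l = ‖cst l‖ := by
  apply le_antisymm
  · unfold sN
    rcases Nat.eq_zero_or_pos d with h | h
    · subst h; simp
    · have : Nonempty (Fin d) := ⟨⟨0, h⟩⟩
      obtain ⟨i, -, hi⟩ := Finset.exists_mem_eq_sup (Finset.univ : Finset (Fin d))
        Finset.univ_nonempty (fun i => (l i).natAbs)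
      rw [hi]
      have := norm_le_pi_norm (cst l) i
      simpa [cst, Nat.cast_natAbs] using this
  · refine (pi_norm_le_iff_of_nonneg (by unfold sN; positivity)).2 fun i => ?_
    have : (l i).natAbs ≤ Finset.univ.sup fun i => (l i).natAbs :=
      Finset.le_sup (f := fun i => (l i).natAbs) (Finset.mem_univ i)
    have h2 : (((l i).natAbs : ℕ) : ℝ) ≤ sN l := by unfold sN; exact_mod_cast this
    simpa [cst, Nat.cast_natAbs] using h2

lemma sq_le_sum {d : ℕ} (x : Fin d → ℝ) : ‖x‖ ^ 2 ≤ ∑ i, x i ^ 2 := by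
  have h0 : 0 ≤ ∑ i, x i ^ 2 := Finset.sum_nonneg fun i _ => sq_nonneg _
  have : ‖x‖ ≤ √(∑ i, x i ^ 2) := by
    refine (pi_norm_le_iff_of_nonneg (Real.sqrt_nonneg _)).2 fun i => ?_
    apply Real.le_sqrt_of_sq_le
    rw [Real.norm_eq_abs, sq_abs]
    exact Finset.single_le_sum (f := fun i => x i ^ 2) (fun i _ => sq_nonneg _) (Finset.mem_univ i)
  calc ‖x‖ ^ 2 ≤ √(∑ i, x i ^ 2) ^ 2 := by gcongr
    _ = _ := Real.sq_sqrt h0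

def fl {d : ℕ} (x : Fin d → ℝ) : Fin d → ℤ := fun i => ⌊x i⌋

lemma fl_meas {d : ℕ} : Measurable (fl : (Fin d → ℝ) → _) :=
  measurable_pi_lambda _ fun i => Int.measurable_floor.comp (measurable_pi_apply i)

lemma map_fl {d : ℕ} : Measure.map (fl : (Fin d → ℝ) → _) volume = Measure.count := by
  apply Measure.ext_of_singleton
  intro l
  rw [Measure.map_apply fl_meas (measurableSet_singleton l), Measure.count_singleton]
  have : fl ⁻¹' {l} = Set.univ.pi fun i => Set.Ico (l i : ℝ) (l i + 1) := by
    ext x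
    simp [fl, funext_iff, Int.floor_eq_iff, Set.mem_pi]
  rw [this, Real.volume_pi_Ico]
  simp

lemma tsum_eq {d : ℕ} (g : (Fin d → ℤ) → ℝ) (hg : g.support.Finite) :
    ∑' l, g l = ∫ x : Fin d → ℝ, g (fl x) := by
  have hs : Summable g := summable_of_hasFiniteSupport hg
  have hi : Integrable g Measure.count := integrable_count_iff.2 hs.norm
  rw [← integral_map (f := g) fl_meas.aemeasurable (by
    exact (measurable_of_countable g).aestronglyMeasurable), map_fl,
    integral_countable hi]
  simp [measureReal_def]

lemma dom_int (d : ℕ) (hd : 3 ≤ d) :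
    Integrable (fun x : Fin d → ℝ => if ‖x‖ ≤ 3 then 4 * (‖x‖ ^ 2)⁻¹ else 0) := by
  have : Nonempty (Fin d) := ⟨⟨0, by omega⟩⟩
  have := (integrable_fun_norm_addHaar (volume : Measure (Fin d → ℝ))
    (f := fun y : ℝ => if y ≤ 3 then 4 * (y ^ 2)⁻¹ else 0)).2
  apply this
  have h1 : IntegrableOn (fun y : ℝ => 4 * y ^ (d - 3)) (Set.Ioc 0 3) :=
    ((by fun_prop : Continuous fun y : ℝ => 4 * y ^ (d - 3)).integrableOn_Icc).mono_set
      Set.Ioc_subset_Icc_self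
  have h2 := (integrable_indicator_iff measurableSet_Ioc).2 h1
  refine (h2.integrableOn (s := Set.Ioi 0)).congr_fun (fun y hy => ?_) measurableSet_Ioi
  have hy0 : (0:ℝ) < y := hy
  obtain ⟨e, rfl⟩ : ∃ e, d = e + 3 := ⟨d - 3, by omega⟩
  by_cases h : y ≤ 3
  · simp [Set.indicator, h, hy0]
    field_simp
    ring
  · simp [Set.indicator, h, hy0]

lemma cube_eq (d : ℕ) : (Set.univ.pi fun _ : Fin d => Set.Icc (-1:ℝ) 1) = {x | ‖x‖ ≤ 1} := by
  ext x
  simp only [Set.mem_univ_pi, Set.mem_Icc, Set.mem_ofPred_eq,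
    pi_norm_le_iff_of_nonneg zero_le_one, Real.norm_eq_abs, abs_le]

lemma cube_int (d : ℕ) (hd : 3 ≤ d) :
    IntegrableOn (fun x : Fin d → ℝ => (∑ i, x i ^ 2)⁻¹) {x | ‖x‖ ≤ 1} := by
  have hm : MeasurableSet {x : Fin d → ℝ | ‖x‖ ≤ 1} :=
    measurableSet_le measurable_norm measurable_const
  refine Integrable.mono' (dom_int d hd).integrableOn
    (by fun_prop : Measurable fun x : Fin d → ℝ => ∑ i, x i ^ 2).inv.aestronglyMeasurable ?_
  refine (ae_restrict_iff' hm).2 (Filter.Eventually.of_forall fun x hx => ?_)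
  have hx1 : ‖x‖ ≤ 1 := hx
  have h3 : ‖x‖ ≤ 3 := by linarith
  have h0 : 0 ≤ ∑ i, x i ^ 2 := Finset.sum_nonneg fun i _ => sq_nonneg _
  rw [if_pos h3, Real.norm_of_nonneg (inv_nonneg.2 h0)]
  rcases eq_or_ne x 0 with rfl | hne
  · simp
  · have hp : 0 < ‖x‖ := norm_pos_iff.2 hne
    have : (∑ i, x i ^ 2)⁻¹ ≤ (‖x‖ ^ 2)⁻¹ := inv_anti₀ (by positivity) (sq_le_sum x)
    have : 0 ≤ (‖x‖ ^ 2)⁻¹ := by positivity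
    linarith

lemma cube_pos (d : ℕ) (hd : 3 ≤ d) :
    0 < ∫ x in {x : Fin d → ℝ | ‖x‖ ≤ 1}, (∑ i, x i ^ 2)⁻¹ := by
  have hm : MeasurableSet {x : Fin d → ℝ | ‖x‖ ≤ 1} :=
    measurableSet_le measurable_norm measurable_const
  rw [setIntegral_pos_iff_support_of_nonneg_ae _ (cube_int d hd)]
  · refine lt_of_lt_of_le ?_ (measure_mono (s := Set.univ.pi fun _ : Fin d => Set.Ioo (0:ℝ) 1) ?_)
    · rw [Real.volume_pi_Ioo]; simp
    · intro x hx
      have hx' : ∀ i, 0 < x i ∧ x i < 1 := by simpa [Set.mem_pi] using hx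
      constructor
      · have : 0 < ∑ i, x i ^ 2 := Finset.sum_pos (fun i _ => pow_pos (hx' i).1 2)
          ⟨⟨0, by omega⟩, Finset.mem_univ _⟩
        simp only [Function.mem_support]
        positivity
      · show ‖x‖ ≤ 1
        exact (pi_norm_le_iff_of_nonneg zero_le_one).2 fun i => by
          rw [Real.norm_eq_abs, abs_le]; constructor <;> linarith [(hx' i).1, (hx' i).2]
  · exact Filter.Eventually.of_forall fun x =>
      inv_nonneg.2 (Finset.sum_nonneg fun i _ => sq_nonneg _)

def g {d : ℕ} (k : Fin d → ℤ) (N : ℕ) (l : Fin d → ℤ) : ℝ :=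
  if l ≠ 0 ∧ k - l ≠ 0 ∧ ((N:ℝ) + 1/2)⁻¹ * sN l ≤ 1 ∧
              ((N:ℝ) + 1/2)⁻¹ * sN (k - l) ≤ 1
          then (nsq l + nsq (k - l))⁻¹ else 0

lemma g_supp {d : ℕ} (k : Fin d → ℤ) (N : ℕ) : (g k N).support.Finite := by
  refine (Set.finite_Icc (fun _ : Fin d => -((N:ℤ)+1)) (fun _ => (N:ℤ)+1)).subset ?_
  intro l hl
  have hM : (0:ℝ) < (N:ℝ) + 1/2 := by positivity
  have h : ((N:ℝ) + 1/2)⁻¹ * sN l ≤ 1 := by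
    by_contra h
    apply hl
    simp only [g]
    rw [if_neg (fun h' => h h'.2.2.1)]
  rw [inv_mul_le_iff₀ hM, sN_eq] at h
  have h2 : ∀ i, |l i| ≤ (N:ℤ) + 1 := fun i => by
    have := (norm_le_pi_norm (cst l) i).trans h
    rw [Real.norm_eq_abs] at this
    have h3 : |(l i : ℝ)| ≤ (N:ℝ) + 1 := by simp only [cst] at this; linarith
    exact_mod_cast h3
  exact ⟨fun i => (abs_le.1 (h2 i)).1, fun i => (abs_le.1 (h2 i)).2⟩

lemma scale {d : ℕ} (hd : 3 ≤ d) (k : Fin d → ℤ) (N : ℕ) :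
    (((N:ℝ) + 1/2)⁻¹) ^ (d - 2) * ∑' l, g k N l =
      ∫ x : Fin d → ℝ, ((N:ℝ) + 1/2)^2 * g k N (fl (((N:ℝ) + 1/2) • x)) := by
  have hM : (0:ℝ) < (N:ℝ) + 1/2 := by positivity
  rw [tsum_eq _ (g_supp k N), integral_const_mul,
    Measure.integral_comp_smul volume (fun x => g k N (fl x))]
  generalize (N:ℝ) + 1/2 = M at *
  obtain ⟨e, rfl⟩ : ∃ e, d = e + 2 := ⟨d - 2, by omega⟩
  simp only [Module.finrank_fintype_fun_eq_card, Fintype.card_fin, Nat.add_sub_cancel, smul_eq_mul]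
  rw [abs_of_pos (by positivity), inv_pow, pow_add]
  field_simp

lemma cst_sub_norm {d : ℕ} (y : Fin d → ℝ) : ‖cst (fl y) - y‖ ≤ 1 := by
  refine (pi_norm_le_iff_of_nonneg zero_le_one).2 fun i => ?_
  simp only [cst, fl, Pi.sub_apply, Real.norm_eq_abs, abs_le]
  constructor <;> linarith [Int.floor_le (y i), Int.lt_floor_add_one (y i)]

lemma one_le_norm {d : ℕ} (l : Fin d → ℤ) (hl : l ≠ 0) : 1 ≤ ‖cst l‖ := by
  obtain ⟨i, hi⟩ := Function.ne_iff.1 hl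
  have h1 : (1:ℤ) ≤ |l i| := Int.one_le_abs hi
  have h2 : (1:ℝ) ≤ |(l i : ℝ)| := by exact_mod_cast h1
  exact h2.trans (norm_le_pi_norm (cst l) i)

lemma nsq_nonneg {d : ℕ} (l : Fin d → ℤ) : 0 ≤ nsq l :=
  Finset.sum_nonneg fun i _ => sq_nonneg _

lemma bound {d : ℕ} (k : Fin d → ℤ) (N : ℕ) (x : Fin d → ℝ) :
    ‖((N:ℝ) + 1/2)^2 * g k N (fl (((N:ℝ) + 1/2) • x))‖ ≤
      if ‖x‖ ≤ 3 then 4 * (‖x‖ ^ 2)⁻¹ else 0 := by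
  have hM : (1/2:ℝ) ≤ (N:ℝ) + 1/2 := by simp
  have hR : 0 ≤ if ‖x‖ ≤ 3 then 4 * (‖x‖ ^ 2)⁻¹ else 0 := by positivity
  by_cases h : fl (((N:ℝ) + 1/2) • x) ≠ 0 ∧ k - fl (((N:ℝ) + 1/2) • x) ≠ 0 ∧
      ((N:ℝ) + 1/2)⁻¹ * sN (fl (((N:ℝ) + 1/2) • x)) ≤ 1 ∧
      ((N:ℝ) + 1/2)⁻¹ * sN (k - fl (((N:ℝ) + 1/2) • x)) ≤ 1
  · unfold g
    rw [if_pos h]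
    obtain ⟨h0, -, h1, -⟩ := h
    generalize (N:ℝ) + 1/2 = M at *
    have hM0 : 0 < M := by linarith
    have hc := cst_sub_norm (M • x)
    have hc' : M * ‖x‖ ≤ ‖cst (fl (M • x))‖ + 1 := by
      have := norm_sub_norm_le (M • x) (cst (fl (M • x)))
      rw [norm_sub_rev, norm_smul, Real.norm_of_nonneg hM0.le] at this
      linarith
    have hne : x ≠ 0 := by
      rintro rfl
      apply h0
      ext i
      simp [fl]
    generalize fl (M • x) = l at *
    have hl := one_le_norm l h0
    rw [inv_mul_le_iff₀ hM0, sN_eq] at h1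
    have hx3 : ‖x‖ ≤ 3 := by
      by_contra hx
      push Not at hx
      nlinarith
    rw [if_pos hx3]
    have hn : ‖cst l‖ ^ 2 ≤ nsq l + nsq (k - l) := by
      have h2 := sq_le_sum (cst l)
      have h3 := nsq_nonneg (k - l)
      have : (∑ i, cst l i ^ 2) = nsq l := rfl
      linarith
    have hpos : 0 < nsq l + nsq (k - l) := by nlinarith
    rw [Real.norm_of_nonneg (by positivity)]
    have hx : 0 < ‖x‖ := norm_pos_iff.2 hne
    rw [← div_eq_mul_inv, ← div_eq_mul_inv, div_le_div_iff₀ hpos (by positivity)]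
    have : (M * ‖x‖) ^ 2 ≤ (2 * ‖cst l‖) ^ 2 := by
      apply pow_le_pow_left₀ (by positivity); linarith
    nlinarith
  · have : g k N (fl (((N:ℝ) + 1/2) • x)) = 0 := if_neg h
    rw [this]
    simpa using hR

lemma lim {d : ℕ} (k : Fin d → ℤ) (x : Fin d → ℝ) (hx0 : x ≠ 0) (hx1 : ‖x‖ ≠ 1) :
    Filter.Tendsto (fun N : ℕ => ((N:ℝ) + 1/2)^2 * g k N (fl (((N:ℝ) + 1/2) • x))) Filter.atTop
      (nhds ({x : Fin d → ℝ | ‖x‖ ≤ 1}.indicator (fun x => 1/2 * (∑ i, x i ^ 2)⁻¹) x)) := by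
  have hMt : Filter.Tendsto (fun N : ℕ => (((N:ℝ) + 1/2)⁻¹)) Filter.atTop (nhds 0) :=
    (Filter.tendsto_atTop_add_const_right _ _ tendsto_natCast_atTop_atTop).inv_tendsto_atTop
  have hMp : ∀ N : ℕ, 0 < (N:ℝ) + 1/2 := fun N => by positivity
  have hu : Filter.Tendsto (fun N : ℕ => ((N:ℝ) + 1/2)⁻¹ • cst (fl (((N:ℝ) + 1/2) • x)))
      Filter.atTop (nhds x) := by
    rw [tendsto_iff_norm_sub_tendsto_zero]
    refine squeeze_zero (fun _ => norm_nonneg _) (fun N => ?_) hMt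
    have h := cst_sub_norm (((N:ℝ) + 1/2) • x)
    have e : ((N:ℝ) + 1/2)⁻¹ • cst (fl (((N:ℝ) + 1/2) • x)) - x =
        ((N:ℝ) + 1/2)⁻¹ • (cst (fl (((N:ℝ) + 1/2) • x)) - ((N:ℝ) + 1/2) • x) := by
      rw [smul_sub, inv_smul_smul₀ (hMp N).ne']
    rw [e, norm_smul, Real.norm_of_nonneg (inv_nonneg.2 (hMp N).le)]
    exact mul_le_of_le_one_right (inv_nonneg.2 (hMp N).le) h
  have hv : Filter.Tendsto (fun N : ℕ => ((N:ℝ) + 1/2)⁻¹ • cst (k - fl (((N:ℝ) + 1/2) • x)))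
      Filter.atTop (nhds (-x)) := by
    have := (hMt.smul_const (cst k)).sub hu
    rw [zero_smul, zero_sub] at this
    refine this.congr fun N => ?_
    ext i
    simp [cst]
    ring
  have hsN : ∀ (N : ℕ) (l : Fin d → ℤ),
      ((N:ℝ) + 1/2)⁻¹ * sN l = ‖((N:ℝ) + 1/2)⁻¹ • cst l‖ := fun N l => by
    rw [norm_smul, Real.norm_of_nonneg (inv_nonneg.2 (hMp N).le), sN_eq]
  rcases lt_or_gt_of_ne hx1 with hlt | hgt
  · rw [Set.indicator_of_mem (show x ∈ {x : Fin d → ℝ | ‖x‖ ≤ 1} from hlt.le)]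
    have hS : 0 < ∑ i, x i ^ 2 :=
      lt_of_lt_of_le (pow_pos (norm_pos_iff.2 hx0) 2) (sq_le_sum x)
    have hcont : Continuous fun y : Fin d → ℝ => ∑ i, y i ^ 2 := by fun_prop
    have h1 := ((hcont.tendsto x).comp hu).add ((hcont.tendsto (-x)).comp hv)
    have h2 := h1.inv₀ (by simp only [Pi.neg_apply, neg_sq]; positivity)
    have e : ((∑ i, x i ^ 2) + ∑ i, (-x) i ^ 2)⁻¹ = 1/2 * (∑ i, x i ^ 2)⁻¹ := by
      simp only [Pi.neg_apply, neg_sq]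
      field_simp
      ring
    rw [e] at h2
    refine h2.congr' ?_
    have hv1 : ‖-x‖ < 1 := by rwa [norm_neg]
    filter_upwards [hu.norm.eventually_lt_const hlt, hv.norm.eventually_lt_const hv1,
      hu.eventually_ne hx0, hv.eventually_ne (neg_ne_zero.2 hx0)] with N a1 a2 a3 a4
    have hz : cst (0 : Fin d → ℤ) = 0 := by ext i; simp [cst]
    have : g k N (fl (((N:ℝ) + 1/2) • x)) = (nsq (fl (((N:ℝ) + 1/2) • x)) +
        nsq (k - fl (((N:ℝ) + 1/2) • x)))⁻¹ := by
      refine if_pos ⟨fun h => a3 ?_, fun h => a4 ?_, ?_, ?_⟩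
      · rw [h, hz, smul_zero]
      · rw [h, hz, smul_zero]
      · rw [hsN]; exact a1.le
      · rw [hsN]; exact a2.le
    rw [this]
    have hq : ∀ l : Fin d → ℤ, ∑ i, (((N:ℝ) + 1/2)⁻¹ • cst l) i ^ 2 =
        (((N:ℝ) + 1/2) ^ 2)⁻¹ * nsq l := fun l => by
      simp only [nsq, Finset.mul_sum, Pi.smul_apply, smul_eq_mul, cst, mul_pow, inv_pow]
    simp only [Function.comp]
    rw [hq, hq, ← mul_add, mul_inv, inv_inv]
  · rw [Set.indicator_of_notMem (show x ∉ {x : Fin d → ℝ | ‖x‖ ≤ 1} from not_le.2 hgt)]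
    refine tendsto_const_nhds.congr' ?_
    filter_upwards [hu.norm.eventually_const_lt hgt] with N a1
    have : g k N (fl (((N:ℝ) + 1/2) • x)) = 0 := if_neg fun h => by
      have := h.2.2.1
      rw [hsN] at this
      linarith
    rw [this, mul_zero]

theorem stmt15 (d : ℕ) (hd : 3 ≤ d) (k : Fin d → ℤ) (hk : k ≠ 0) :
    Filter.Tendsto
      (fun N : ℕ => (((N:ℝ) + 1/2)⁻¹) ^ (d - 2) *
        ∑' l : Fin d → ℤ,
          if l ≠ 0 ∧ k - l ≠ 0 ∧ ((N:ℝ) + 1/2)⁻¹ * sN l ≤ 1 ∧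
              ((N:ℝ) + 1/2)⁻¹ * sN (k - l) ≤ 1
          then (nsq l + nsq (k - l))⁻¹ else 0)
      Filter.atTop
      (nhds ((1/2) *
        ∫ x in (Set.univ.pi fun _ : Fin d => Set.Icc (-1:ℝ) 1), (∑ i, (x i)^2)⁻¹)) ∧
    0 < (1/2) *
        ∫ x in (Set.univ.pi fun _ : Fin d => Set.Icc (-1:ℝ) 1), (∑ i, (x i)^2)⁻¹ := by
  rw [cube_eq]
  refine ⟨?_, by have := cube_pos d hd; positivity⟩
  have hm : MeasurableSet {x : Fin d → ℝ | ‖x‖ ≤ 1} :=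
    measurableSet_le measurable_norm measurable_const
  have : Nonempty (Fin d) := ⟨⟨0, by omega⟩⟩
  rw [← integral_const_mul, ← integral_indicator hm]
  refine Filter.Tendsto.congr (fun N => (scale hd k N).symm) ?_
  refine tendsto_integral_of_dominated_convergence _ (fun N => ?_) (dom_int d hd)
    (fun N => Filter.Eventually.of_forall (bound k N)) ?_
  · have : Measurable fun x : Fin d → ℝ => g k N (fl (((N:ℝ) + 1/2) • x)) :=
      (measurable_of_countable (g k N)).comp (fl_meas.comp (measurable_const_smul _))
    exact (this.const_mul _).aestronglyMeasurable
  · have h1 : ∀ᵐ x : Fin d → ℝ, x ∉ Metric.sphere (0 : Fin d → ℝ) 1 :=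
      measure_eq_zero_iff_ae_notMem.1 (Measure.addHaar_sphere _ _ _)
    have h0 : ∀ᵐ x : Fin d → ℝ, x ≠ 0 := Measure.ae_ne _ _
    filter_upwards [h0, h1] with x hx0 hx1
    exact lim k x hx0 (by simpa using hx1)

end SBE
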